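/- As k → ∞, the Derrida–Hilhorst approximation satisfies L_k[G_k] = (1/C_k) ∫_ℝ F_▷(y)/(1 + e^y) dy + O(e^{−k}) and also L_k[G_k] = (1/C_k) ∫_ℝ F_◁(y)/(1 + e^y) dy + O(e^{−k}). -/

import Mathlib

open MeasureTheory ProbabilityTheory Real Filter Set
open scoped ENNReal

noncomputable def hkfun (k x : ℝ) : ℝ :=
  Real.log ((Real.exp (-k) + Real.exp x) / (1 + Real.exp (x - k)))

noncomputable def hY (y : ℝ) : ℝ := y + Real.log (1 + Real.exp (-y))

/-- A σ-finite measure ν is invariant for the chain Y_{n+1} = z_{n+1} + hY (Y_n),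
where the increments have density ζ. -/
def IsInvariantY (ζ : ℝ → ℝ) (ν : Measure ℝ) : Prop :=
  ∀ g : ℝ → ℝ≥0∞, Measurable g →
    ∫⁻ z, g z ∂ν = ∫⁻ y, ∫⁻ z, g (z + hY y) * ENNReal.ofReal (ζ z) ∂volume ∂ν

noncomputable def Fs (ν : Measure ℝ) (x : ℝ) : ℝ := (ν (Set.Iic x)).toReal

noncomputable def CkDH (νl νr : Measure ℝ) (k : ℝ) : ℝ := Fs νr k + Fs νl k

/-- The Derrida--Hilhorst tail function. -/
noncomputable def GkDH (νl νr : Measure ℝ) (k x : ℝ) : ℝ :=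
  if 0 ≤ x then Fs νr (k - x) / CkDH νl νr k else 1 - Fs νl (x + k) / CkDH νl νr k

noncomputable def Lk (k : ℝ) (G : ℝ → ℝ) : ℝ := ∫ x, G x / (1 + Real.exp (k - x))


lemma aux_h_gt (y : ℝ) : y < hY y := by
  unfold hY
  have : 0 < Real.log (1 + Real.exp (-y)) := Real.log_pos (by linarith [Real.exp_pos (-y)])
  linarith

lemma aux_h_eq (y : ℝ) : hY y = Real.log (1 + Real.exp y) := by
  unfold hY
  have h1 : 1 + Real.exp y = Real.exp y * (1 + Real.exp (-y)) := by
    rw [mul_add, ← Real.exp_add]; simp; ring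
  rw [h1, Real.log_mul (by positivity) (by positivity), Real.log_exp]

lemma aux_h_pos (y : ℝ) : 0 < hY y := by
  rw [aux_h_eq]
  exact Real.log_pos (by linarith [Real.exp_pos y])

lemma aux_h_meas : Measurable hY := by
  unfold hY
  fun_prop

lemma aux_h_set (x : ℝ) (hx : 0 < x) :
    {y | hY y ≤ x} = Set.Iic (Real.log (Real.exp x - 1)) := by
  have h1 : 1 < Real.exp x := by simpa using hx
  ext y
  simp only [Set.mem_ofPred_eq, Set.mem_Iic]
  rw [aux_h_eq, Real.log_le_iff_le_exp (by positivity), Real.le_log_iff_exp_le (by linarith)]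
  constructor <;> intro h <;> linarith

lemma aux_tail_int (y : ℝ) :
    ∫⁻ x in Set.Ici y, ENNReal.ofReal (1 / (1 + Real.exp x)) = ENNReal.ofReal (hY y - y) := by
  have hd : ∀ x ∈ Set.Ici y, HasDerivAt (fun x => -Real.log (1 + Real.exp (-x)))
      (1 / (1 + Real.exp x)) x := by
    intro x _
    have h1 : HasDerivAt (fun x : ℝ => 1 + Real.exp (-x)) (Real.exp (-x) * (-1)) x :=
      ((hasDerivAt_neg x).exp).const_add 1
    have h2 := (h1.log (by positivity)).neg
    refine h2.congr_deriv ?_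
    rw [Real.exp_neg]
    have := Real.exp_pos x
    field_simp
    ring
  have hnn : ∀ x ∈ Set.Ioi y, 0 ≤ 1 / (1 + Real.exp x) := fun x _ => by positivity
  have hlim : Tendsto (fun x => -Real.log (1 + Real.exp (-x))) atTop (nhds 0) := by
    have h1 : Tendsto (fun x : ℝ => 1 + Real.exp (-x)) atTop (nhds (1 + 0)) :=
      (Real.tendsto_exp_neg_atTop_nhds_zero).const_add 1
    have h2 := (h1.log (by norm_num)).neg
    simpa using h2
  have hi := integrableOn_Ioi_deriv_of_nonneg' hd hnn hlim
  have he := integral_Ioi_of_hasDerivAt_of_nonneg' hd hnn hlim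
  rw [setLIntegral_congr Ioi_ae_eq_Ici.symm,
    ← ofReal_integral_eq_lintegral_ofReal hi (Eventually.of_forall fun x => by
      simp only [Pi.zero_apply]; positivity), he]
  congr 1
  unfold hY
  ring

lemma aux_sf (ν : Measure ℝ) (hfin : ∀ x : ℝ, ν (Set.Iic x) < ⊤) : SigmaFinite ν := by
  have : IsLocallyFiniteMeasure ν := ⟨fun x => ⟨Set.Iic (x+1), Iic_mem_nhds (by linarith), hfin _⟩⟩
  infer_instance

lemma aux_step1 (ν : Measure ℝ) [SigmaFinite ν] :
    ∫⁻ x, ν (Set.Iic x) * ENNReal.ofReal (1 / (1 + Real.exp x))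
      = ∫⁻ y, ENNReal.ofReal (hY y - y) ∂ν := by
  have hS : MeasurableSet {p : ℝ × ℝ | p.2 ≤ p.1} := measurableSet_le measurable_snd measurable_fst
  have hw : Measurable fun x : ℝ => ENNReal.ofReal (1 / (1 + Real.exp x)) := by fun_prop
  calc ∫⁻ x, ν (Set.Iic x) * ENNReal.ofReal (1 / (1 + Real.exp x))
      = ∫⁻ x, ν (Set.Iic x) ∂(volume.withDensity fun x => ENNReal.ofReal (1 / (1 + Real.exp x))) := by
        rw [lintegral_withDensity_eq_lintegral_mul _ hw]
        · simp [mul_comm]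
        · exact Monotone.measurable (fun a b h => measure_mono (Set.Iic_subset_Iic.2 h))
    _ = ((volume.withDensity fun x => ENNReal.ofReal (1 / (1 + Real.exp x))).prod ν)
          {p : ℝ × ℝ | p.2 ≤ p.1} := by
        rw [Measure.prod_apply hS]; rfl
    _ = ∫⁻ y, ENNReal.ofReal (hY y - y) ∂ν := by
        rw [Measure.prod_apply_symm hS]
        refine lintegral_congr fun y => ?_
        have : (fun x => (x, y)) ⁻¹' {p : ℝ × ℝ | p.2 ≤ p.1} = Set.Ici y := by ext; simp
        rw [this, withDensity_apply _ measurableSet_Ici, aux_tail_int]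

lemma aux_step2 (ν : Measure ℝ) [SigmaFinite ν] (hfin : ∀ x : ℝ, ν (Set.Iic x) < ⊤) :
    ∫⁻ x, ENNReal.ofReal (Fs ν x - (ν {y | hY y ≤ x}).toReal)
      = ∫⁻ y, ENNReal.ofReal (hY y - y) ∂ν := by
  have hS : MeasurableSet {p : ℝ × ℝ | p.2 ≤ p.1 ∧ p.1 < hY p.2} :=
    (measurableSet_le measurable_snd measurable_fst).inter
      (measurableSet_lt measurable_fst (aux_h_meas.comp measurable_snd))
  calc _ = (volume.prod ν) {p : ℝ × ℝ | p.2 ≤ p.1 ∧ p.1 < hY p.2} := by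
        rw [Measure.prod_apply hS]
        refine lintegral_congr fun x => ?_
        have hsub : {y | hY y ≤ x} ⊆ Set.Iic x := fun y hy => (aux_h_gt y).le.trans hy
        have hf : ν {y | hY y ≤ x} ≠ ⊤ := ((measure_mono hsub).trans_lt (hfin x)).ne
        have : (Prod.mk x) ⁻¹' {p : ℝ × ℝ | p.2 ≤ p.1 ∧ p.1 < hY p.2}
          = Set.Iic x \ {y | hY y ≤ x} := by ext; simp
        rw [this, measure_sdiff hsub (aux_h_meas measurableSet_Iic).nullMeasurableSet hf, Fs,
          ← ENNReal.toReal_sub_of_le (measure_mono hsub) (hfin x).ne, ENNReal.ofReal_toReal]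
        exact ENNReal.sub_ne_top (hfin x).ne
    _ = _ := by
        rw [Measure.prod_apply_symm hS]
        refine lintegral_congr fun y => ?_
        have : (fun x => (x, y)) ⁻¹' {p : ℝ × ℝ | p.2 ≤ p.1 ∧ p.1 < hY p.2} = Set.Ico y (hY y) := by
          ext; simp
        rw [this, Real.volume_Ico]

lemma aux_step3 (ζ : ℝ → ℝ) (hζmeas : Measurable ζ) (hζnn : ∀ x, 0 ≤ ζ x)
    (ν : Measure ℝ) [SigmaFinite ν] (hinv : IsInvariantY ζ ν)
    (hfin : ∀ x : ℝ, ν (Set.Iic x) < ⊤) (K : ℝ → ℝ) (hKm : Measurable K)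
    (hK : ∀ x, K x = (ν {y | hY y ≤ x}).toReal) (x : ℝ) :
    Integrable (fun z => K (x - z) * ζ z) ∧ ∫ z, K (x - z) * ζ z = Fs ν x := by
  have hf : ∀ x, ν {y | hY y ≤ x} ≠ ⊤ := fun x =>
    ((measure_mono (fun y hy => (aux_h_gt y).le.trans hy :
      {y | hY y ≤ x} ⊆ Set.Iic x)).trans_lt (hfin x)).ne
  have hm : Measurable fun z => K (x - z) * ζ z := by fun_prop
  have hnn : ∀ z, 0 ≤ K (x - z) * ζ z := fun z => mul_nonneg (by rw [hK]; positivity) (hζnn z)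
  have key : ∫⁻ z, ENNReal.ofReal (K (x - z) * ζ z) = ν (Set.Iic x) := by
    have h1 := hinv (Set.indicator (Set.Iic x) 1) (measurable_one.indicator measurableSet_Iic)
    rw [lintegral_indicator_one measurableSet_Iic, lintegral_lintegral_swap] at h1
    · rw [h1]
      refine lintegral_congr fun z => ?_
      have hmz : MeasurableSet {y | hY y ≤ x - z} := aux_h_meas measurableSet_Iic
      rw [lintegral_mul_const]
      · rw [ENNReal.ofReal_mul (by rw [hK]; positivity), hK, ENNReal.ofReal_toReal (hf _)]
        congr 1
        rw [← lintegral_indicator_one hmz]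
        refine lintegral_congr fun y => ?_
        by_cases h : hY y ≤ x - z
        · rw [Set.indicator_of_mem (by exact h), Set.indicator_of_mem]; rfl
          simp; linarith
        · rw [Set.indicator_of_notMem (by exact h), Set.indicator_of_notMem]
          simp; linarith
      · exact (measurable_one.indicator measurableSet_Iic).comp
          (measurable_const.add aux_h_meas)
    · refine Measurable.aemeasurable ?_
      refine Measurable.mul ?_ ?_
      · exact (measurable_one.indicator measurableSet_Iic).comp
          (measurable_snd.add (aux_h_meas.comp measurable_fst))
      · exact (hζmeas.comp measurable_snd).ennreal_ofReal
  constructor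
  · refine ⟨hm.aestronglyMeasurable, ?_⟩
    rw [hasFiniteIntegral_iff_ofReal (Eventually.of_forall hnn), key]
    exact hfin x
  · rw [integral_eq_lintegral_of_nonneg_ae (Eventually.of_forall hnn) hm.aestronglyMeasurable, key]
    rfl

lemma aux_r_int (ν : Measure ℝ)
    (hfin : ∀ x : ℝ, ν (Set.Iic x) < ⊤) (c ρ : ℝ) (hρ0 : 0 < ρ) (Ca x₁ : ℝ)
    (hasym : ∀ x ≥ x₁, |(ν (Set.Iic x)).toReal - (x + c)| ≤ Ca * Real.exp (-ρ * x))
    (K : ℝ → ℝ) (hKm : Measurable K)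
    (hK : ∀ x, K x = (ν {y | hY y ≤ x}).toReal) :
    Integrable (fun x => K x - (if 0 < x then x + c else 0)) := by
  have hmr : Measurable (fun x => K x - (if 0 < x then x + c else 0)) :=
    hKm.sub (Measurable.ite measurableSet_Ioi (by fun_prop) measurable_const)
  set X := max 1 (x₁ + 1) with hX
  have hX1 : 1 ≤ X := le_max_left _ _
  have hX2 : x₁ + 1 ≤ X := le_max_right _ _
  have hK0 : ∀ x, 0 ≤ K x := fun x => by rw [hK]; positivity
  have hmono : Monotone K := by
    intro a b hab
    rw [hK, hK]
    refine ENNReal.toReal_mono ?_ (measure_mono fun y hy => le_trans hy hab)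
    exact ((measure_mono (fun y hy => (aux_h_gt y).le.trans hy :
      {y | hY y ≤ b} ⊆ Set.Iic b)).trans_lt (hfin b)).ne
  have h1 : IntegrableOn (fun x => K x - (if 0 < x then x + c else 0)) (Set.Iic 0) := by
    refine integrableOn_zero.congr_fun ?_ measurableSet_Iic
    intro x hx
    have hx' : x ≤ 0 := hx
    have : {y | hY y ≤ x} = ∅ := by
      ext y; simp; linarith [aux_h_pos y]
    simp [hK, this, hx'.not_gt]
  have h2 : IntegrableOn (fun x => K x - (if 0 < x then x + c else 0)) (Set.Ioc 0 X) := by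
    refine Measure.integrableOn_of_bounded (M := K X + X + |c|) (by simp) hmr.aestronglyMeasurable ?_
    refine (ae_restrict_iff' measurableSet_Ioc).2 (Eventually.of_forall fun x hx => ?_)
    rw [if_pos hx.1, Real.norm_eq_abs, abs_le]
    have := hmono hx.2
    have := hx.1
    have := hx.2
    constructor <;> linarith [hK0 x, hK0 X, le_abs_self c, neg_abs_le c]
  have h3 : IntegrableOn (fun x => K x - (if 0 < x then x + c else 0)) (Set.Ioi X) := by
    have hb : IntegrableOn (fun x => 2 * Real.exp (-x) + |Ca| * Real.exp ρ * Real.exp (-ρ * x))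
        (Set.Ioi X) :=
      ((integrableOn_exp_neg_Ioi X).const_mul 2).add
        ((integrableOn_exp_mul_Ioi (by linarith : -ρ < 0) X).const_mul _)
    refine Integrable.mono' hb hmr.aestronglyMeasurable ?_
    refine (ae_restrict_iff' measurableSet_Ioi).2 (Eventually.of_forall fun x hx => ?_)
    have hx' : X < x := hx
    have hx0 : 0 < x := by linarith
    rw [if_pos hx0, Real.norm_eq_abs, hK, aux_h_set x hx0]
    set g := Real.log (Real.exp x - 1) with hg
    have hex : 2 ≤ Real.exp x := by linarith [Real.add_one_le_exp x]
    have hgx : g ≤ x := by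
      rw [hg, Real.log_le_iff_le_exp (by linarith)]; linarith
    have hu : Real.exp (-x) ≤ 1 / 2 := by
      rw [Real.exp_neg, one_div]; exact inv_anti₀ (by norm_num) hex
    have hgx2 : x - 2 * Real.exp (-x) ≤ g := by
      have e1 : Real.exp x - 1 = Real.exp x * (1 - Real.exp (-x)) := by
        rw [mul_sub, ← Real.exp_add]; simp
      have hp := Real.exp_pos (-x)
      rw [hg, e1, Real.log_mul (by positivity) (by linarith), Real.log_exp]
      have := Real.one_sub_inv_le_log_of_pos (x := 1 - Real.exp (-x)) (by linarith)
      have h4 : (1 - Real.exp (-x))⁻¹ ≤ 1 + 2 * Real.exp (-x) := by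
        rw [inv_le_iff_one_le_mul₀ (by linarith)]
        nlinarith
      linarith
    have hgx1 : x - 1 ≤ g := by linarith
    have hA := hasym g (by linarith)
    have hE : Ca * Real.exp (-ρ * g) ≤ |Ca| * Real.exp ρ * Real.exp (-ρ * x) := by
      rw [mul_assoc, ← Real.exp_add]
      refine mul_le_mul (le_abs_self _) (Real.exp_le_exp.2 ?_) (Real.exp_pos _).le (abs_nonneg _)
      nlinarith
    rw [abs_le] at hA ⊢
    constructor <;> linarith [hA.1, hA.2, Real.exp_pos (-x)]
  have := (h1.union h2).union h3
  rw [Set.Iic_union_Ioc_eq_Iic (by linarith), Set.Iic_union_Ioi] at this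
  exact integrableOn_univ.1 this

/-- the compensated difference -/
noncomputable def auxA (c x z : ℝ) : ℝ :=
  (if 0 < x - z then x - z + c else 0) - (if 0 < x then x + c else 0) + (if 0 < x then z else 0)

lemma auxA_meas (c : ℝ) : Measurable fun p : ℝ × ℝ => auxA c p.1 p.2 := by
  unfold auxA
  refine Measurable.add (Measurable.sub ?_ ?_) ?_
  · exact Measurable.ite (measurableSet_lt measurable_const (by fun_prop)) (by fun_prop) (by fun_prop)
  · exact Measurable.ite (measurableSet_lt measurable_const (by fun_prop)) (by fun_prop) (by fun_prop)
  · exact Measurable.ite (measurableSet_lt measurable_const (by fun_prop)) (by fun_prop) (by fun_prop)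

lemma auxA_bound (c x z : ℝ) :
    |auxA c x z| ≤ (Set.Icc (-|z|) |z|).indicator (fun _ => |z| + |c|) x := by
  by_cases hx : x ∈ Set.Icc (-|z|) |z|
  · rw [Set.indicator_of_mem hx]
    obtain ⟨h1, h2⟩ := hx
    unfold auxA
    have a1 := le_abs_self c
    have a2 := neg_abs_le c
    have a3 := le_abs_self z
    have a4 := neg_abs_le z
    rcases abs_cases z with ⟨hz, _⟩ | ⟨hz, _⟩ <;> rw [hz] at * <;>
    split_ifs <;> rw [abs_le] <;> constructor <;> linarith
  · rw [Set.indicator_of_notMem hx]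
    have hx' : x < -|z| ∨ |z| < x := by
      by_contra h; push Not at h; exact hx h
    have a3 := le_abs_self z
    have a4 := neg_abs_le z
    have a5 := abs_nonneg z
    unfold auxA
    rcases hx' with h | h
    · rw [if_neg (by linarith), if_neg (by linarith), if_neg (by linarith)]; simp
    · rw [if_pos (by linarith), if_pos (by linarith), if_pos (by linarith)]
      simp

lemma auxA_integral (c z : ℝ) : ∫ x, auxA c x z = z ^ 2 / 2 - c * z := by
  have h0 : ∫ x in (0:ℝ)..z, (z - x - c) = z ^ 2 / 2 - c * z := by
    have : ∀ x ∈ Set.uIcc 0 z, HasDerivAt (fun x => (z - c) * x - x ^ 2 / 2) (z - x - c) x := by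
      intro x _
      have h := ((hasDerivAt_id x).const_mul (z - c)).sub (((hasDerivAt_id x).pow 2).div_const 2)
      refine h.congr_deriv ?_
      simp; ring
    rw [intervalIntegral.integral_eq_sub_of_hasDerivAt this
      (Continuous.intervalIntegrable (by fun_prop) _ _)]
    ring
  rw [← h0]
  rcases le_or_gt 0 z with hz | hz
  · rw [intervalIntegral.integral_of_le hz, ← integral_indicator measurableSet_Ioc]
    refine integral_congr_ae (Eventually.of_forall fun x => ?_)
    unfold auxA
    simp only [Set.indicator_apply, Set.mem_Ioc]
    split_ifs <;> first | grind | (exfalso; grind)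
  · rw [intervalIntegral.integral_of_ge hz.le, ← integral_indicator measurableSet_Ioc,
      ← integral_neg]
    refine integral_congr_ae (Eventually.of_forall fun x => ?_)
    unfold auxA
    simp only [Set.indicator_apply, Set.mem_Ioc]
    split_ifs <;> first | grind | (exfalso; grind)

lemma auxA_int (c : ℝ) (ζ : ℝ → ℝ) (hζmeas : Measurable ζ) (hζnn : ∀ x, 0 ≤ ζ x)
    (h1 : Integrable fun z => |z| * ζ z) (h2 : Integrable fun z => z ^ 2 * ζ z) :
    Integrable (fun p : ℝ × ℝ => auxA c p.1 p.2 * ζ p.2) (volume.prod volume) := by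
  have hm : Measurable (fun p : ℝ × ℝ => auxA c p.1 p.2 * ζ p.2) :=
    (auxA_meas c).mul (hζmeas.comp measurable_snd)
  have hB : Integrable (fun p : ℝ × ℝ =>
      (Set.Icc (-|p.2|) |p.2|).indicator (fun _ => |p.2| + |c|) p.1 * ζ p.2)
      (volume.prod volume) := by
    have hS : MeasurableSet {p : ℝ × ℝ | p.1 ∈ Set.Icc (-|p.2|) |p.2|} := by
      have : {p : ℝ × ℝ | p.1 ∈ Set.Icc (-|p.2|) |p.2|} = {p | -|p.2| ≤ p.1} ∩ {p | p.1 ≤ |p.2|} := rfl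
      rw [this]
      exact (measurableSet_le (by fun_prop) (by fun_prop)).inter
        (measurableSet_le (by fun_prop) (by fun_prop))
    have hBm : Measurable (fun p : ℝ × ℝ =>
      (Set.Icc (-|p.2|) |p.2|).indicator (fun _ => |p.2| + |c|) p.1 * ζ p.2) := by
      refine Measurable.mul ?_ (hζmeas.comp measurable_snd)
      have := (by fun_prop : Measurable fun p : ℝ × ℝ => |p.2| + |c|).indicator hS
      exact this
    rw [integrable_prod_iff' hBm.aestronglyMeasurable]
    constructor
    · refine Eventually.of_forall fun z => ?_
      have hi : Integrable ((Set.Icc (-|z|) |z|).indicator (fun _ => |z| + |c|)) :=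
        (integrable_indicator_iff measurableSet_Icc).2 (integrableOn_const (by simp))
      exact hi.mul_const (ζ z)
    · have : (fun z => ∫ x, ‖(Set.Icc (-|z|) |z|).indicator (fun _ => |z| + |c|) x * ζ z‖)
          = fun z => 2 * (z ^ 2 * ζ z) + 2 * |c| * (|z| * ζ z) := by
        ext z
        have e : ∀ x, ‖(Set.Icc (-|z|) |z|).indicator (fun _ => |z| + |c|) x * ζ z‖
            = (Set.Icc (-|z|) |z|).indicator (fun _ => |z| + |c|) x * ζ z := fun x => by
          rw [Real.norm_eq_abs, abs_of_nonneg]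
          exact mul_nonneg (Set.indicator_nonneg (fun _ _ => by positivity) _) (hζnn z)
        simp_rw [e]
        rw [integral_mul_const, integral_indicator measurableSet_Icc, setIntegral_const,
          Real.volume_real_Icc_of_le (by linarith [abs_nonneg z]), smul_eq_mul]
        rw [← sq_abs z]; ring
      simp only
      rw [this]
      exact (h2.const_mul 2).add (h1.const_mul _)
  refine Integrable.mono' hB hm.aestronglyMeasurable (Eventually.of_forall fun p => ?_)
  rw [norm_mul, Real.norm_eq_abs, Real.norm_eq_abs, abs_of_nonneg (hζnn _)]
  exact mul_le_mul_of_nonneg_right (auxA_bound _ _ _) (hζnn _)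

lemma aux_key (ζ : ℝ → ℝ) (hζmeas : Measurable ζ) (hζnn : ∀ x, 0 ≤ ζ x)
    (hζprob : ∫ x, ζ x = 1) (hmean : ∫ x, x * ζ x = 0)
    (h2 : Integrable fun z => z ^ 2 * ζ z)
    (ν : Measure ℝ) (hinv : IsInvariantY ζ ν)
    (hfin : ∀ x : ℝ, ν (Set.Iic x) < ⊤) (c ρ : ℝ) (hρ0 : 0 < ρ) (Ca x₁ : ℝ)
    (hasym : ∀ x ≥ x₁, |(ν (Set.Iic x)).toReal - (x + c)| ≤ Ca * Real.exp (-ρ * x)) :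
    Integrable (fun y => Fs ν y / (1 + Real.exp y)) ∧
      ∫ y, Fs ν y / (1 + Real.exp y) = (∫ z, z ^ 2 * ζ z) / 2 := by
  have hsf := aux_sf ν hfin
  have hζi : Integrable ζ := by
    by_contra h; rw [integral_undef h] at hζprob; norm_num at hζprob
  have h1 : Integrable fun z => |z| * ζ z := by
    refine Integrable.mono' (hζi.add h2) (by fun_prop) (Eventually.of_forall fun z => ?_)
    rw [norm_mul, Real.norm_eq_abs, Real.norm_eq_abs, abs_abs, abs_of_nonneg (hζnn _)]
    have : |z| ≤ 1 + z ^ 2 := by rw [← sq_abs]; nlinarith [sq_nonneg (|z| - 1)]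
    have := mul_le_mul_of_nonneg_right this (hζnn z)
    simp only [Pi.add_apply]
    linarith
  have h1' : Integrable fun z => z * ζ z := by
    refine Integrable.mono' h1 (by fun_prop) (Eventually.of_forall fun z => ?_)
    rw [norm_mul, Real.norm_eq_abs, Real.norm_eq_abs, abs_of_nonneg (hζnn _)]
  obtain ⟨K, hK⟩ : ∃ K : ℝ → ℝ, ∀ x, K x = (ν {y | hY y ≤ x}).toReal := ⟨_, fun _ => rfl⟩
  have hsub : ∀ x, {y | hY y ≤ x} ⊆ Set.Iic x := fun x y hy => (aux_h_gt y).le.trans hy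
  have hmono : Monotone K := by
    intro a b hab
    rw [hK, hK]
    refine ENNReal.toReal_mono ?_ (measure_mono fun y hy => le_trans hy hab)
    exact ((measure_mono (hsub b)).trans_lt (hfin b)).ne
  have hKm : Measurable K := hmono.measurable
  have hFmono : Monotone (Fs ν) := fun a b hab =>
    ENNReal.toReal_mono (hfin b).ne (measure_mono (Set.Iic_subset_Iic.2 hab))
  have hFm : Measurable (Fs ν) := hFmono.measurable
  have hr := aux_r_int ν hfin c ρ hρ0 Ca x₁ hasym K hKm hK
  obtain ⟨r, hrdef⟩ : ∃ r : ℝ → ℝ, ∀ x, r x = K x - (if 0 < x then x + c else 0) :=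
    ⟨_, fun _ => rfl⟩
  simp_rw [← hrdef] at hr
  have hF := aux_step3 ζ hζmeas hζnn ν hinv hfin K hKm hK
  -- the product integrand
  let P : ℝ × ℝ → ℝ := fun p => auxA c p.1 p.2 * ζ p.2 + ζ p.2 * r (p.1 - p.2) - r p.1 * ζ p.2
  have hP1 := auxA_int c ζ hζmeas hζnn h1 h2
  have hP2 : Integrable (fun p : ℝ × ℝ => ζ p.2 * r (p.1 - p.2)) (volume.prod volume) :=
    hζi.convolution_integrand (ContinuousLinearMap.mul ℝ ℝ) hr
  have hP3 : Integrable (fun p : ℝ × ℝ => r p.1 * ζ p.2) (volume.prod volume) := hr.mul_prod hζi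
  have hP : Integrable P (volume.prod volume) := (hP1.add hP2).sub hP3
  have hx : ∀ x, ∫ z, P (x, z) = Fs ν x - K x := by
    intro x
    have e : ∀ z, P (x, z) = K (x - z) * ζ z - K x * ζ z + (if 0 < x then 1 else 0) * (z * ζ z) := by
      intro z
      simp only [P, hrdef, auxA]
      split_ifs <;> ring
    simp_rw [e]
    have i1 : Integrable fun z => K (x - z) * ζ z - K x * ζ z := (hF x).1.sub (hζi.const_mul _)
    rw [integral_add i1 (h1'.const_mul _),
      integral_sub (hF x).1 (hζi.const_mul _), integral_const_mul, integral_const_mul,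
      (hF x).2, hζprob, hmean]
    ring
  have hz : ∀ z, ∫ x, P (x, z) = (z ^ 2 * ζ z) / 2 - c * (z * ζ z) := by
    intro z
    have hAi : Integrable fun x => auxA c x z := by
      refine Integrable.mono' (g := (Set.Icc (-|z|) |z|).indicator (fun _ => |z| + |c|)) ?_
        ((auxA_meas c).comp (measurable_id.prodMk measurable_const)).aestronglyMeasurable
        (Eventually.of_forall fun x => auxA_bound c x z)
      exact (integrable_indicator_iff measurableSet_Icc).2 (integrableOn_const (by simp))
    simp only [P]
    have i1 : Integrable fun x => auxA c x z * ζ z + ζ z * r (x - z) :=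
      (hAi.mul_const _).add ((hr.comp_sub_right z).const_mul _)
    rw [integral_sub i1 (hr.mul_const _),
      integral_add (hAi.mul_const _) ((hr.comp_sub_right z).const_mul _), integral_mul_const,
      integral_mul_const, integral_const_mul, integral_sub_right_eq_self r, auxA_integral]
    ring
  have hFK : Integrable fun x => Fs ν x - K x := by
    have := hP.integral_prod_left
    simp_rw [hx] at this
    exact this
  have hFKi : ∫ x, (Fs ν x - K x) = (∫ z, z ^ 2 * ζ z) / 2 := by
    have e1 := integral_prod _ hP
    have e2 := integral_prod_symm _ hP
    simp_rw [hx] at e1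
    simp_rw [hz] at e2
    rw [← e1, e2, integral_sub (h2.div_const 2) (h1'.const_mul c), integral_const_mul, hmean,
      integral_div]
    ring
  have hFKnn : ∀ x, 0 ≤ Fs ν x - K x := fun x => by
    rw [hK]
    exact sub_nonneg.2 (ENNReal.toReal_mono (hfin x).ne (measure_mono (hsub x)))
  have hD := aux_step2 ν hfin
  simp_rw [← hK] at hD
  rw [← aux_step1 ν] at hD
  have hlin : ∫⁻ y, ENNReal.ofReal (Fs ν y / (1 + Real.exp y))
      = ∫⁻ x, ENNReal.ofReal (Fs ν x - K x) := by
    rw [hD]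
    refine lintegral_congr fun x => ?_
    rw [div_eq_mul_one_div, Fs, ENNReal.ofReal_mul ENNReal.toReal_nonneg,
      ENNReal.ofReal_toReal (hfin x).ne]
  have hnn : ∀ y, 0 ≤ Fs ν y / (1 + Real.exp y) := fun y =>
    div_nonneg ENNReal.toReal_nonneg (by positivity)
  have hm : Measurable fun y => Fs ν y / (1 + Real.exp y) := by fun_prop
  constructor
  · refine ⟨hm.aestronglyMeasurable, ?_⟩
    rw [hasFiniteIntegral_iff_ofReal (Eventually.of_forall hnn), hlin,
      ← hasFiniteIntegral_iff_ofReal (Eventually.of_forall hFKnn)]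
    exact hFK.2
  · rw [integral_eq_lintegral_of_nonneg_ae (Eventually.of_forall hnn) hm.aestronglyMeasurable, hlin,
      ← integral_eq_lintegral_of_nonneg_ae (Eventually.of_forall hFKnn) hFK.1, hFKi]

lemma aux_second (ζ : ℝ → ℝ) (hζmeas : Measurable ζ) (hζnn : ∀ x, 0 ≤ ζ x)
    (hζi : Integrable ζ) (δ : ℝ) (hδ : 0 < δ) (Cδ : ℝ)
    (htail : ∀ x : ℝ, 0 ≤ x → ∫ y in {y : ℝ | x < |y|}, ζ y ≤ Cδ * Real.exp (-δ * x)) :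
    Integrable fun z => z ^ 2 * ζ z := by
  refine ⟨by fun_prop, ?_⟩
  rw [hasFiniteIntegral_iff_ofReal (Eventually.of_forall fun z => mul_nonneg (sq_nonneg z) (hζnn z))]
  have hl := lintegral_rpow_eq_lintegral_meas_lt_mul
    (volume.withDensity fun z => ENNReal.ofReal (ζ z)) (f := fun z : ℝ => |z|)
    (Eventually.of_forall fun z => abs_nonneg z) (by fun_prop) (p := 2) (by norm_num)
  rw [lintegral_withDensity_eq_lintegral_mul _ hζmeas.ennreal_ofReal (by fun_prop)] at hl
  have e : ∫⁻ z, ENNReal.ofReal (z ^ 2 * ζ z) = ∫⁻ a, ((fun z => ENNReal.ofReal (ζ z)) *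
      fun ω : ℝ => ENNReal.ofReal (|ω| ^ (2:ℝ))) a := by
    refine lintegral_congr fun z => ?_
    simp only [Pi.mul_apply]
    rw [← ENNReal.ofReal_mul (hζnn z)]
    congr 1
    rw [Real.rpow_two, sq_abs, mul_comm]
  rw [e, hl]
  refine ENNReal.mul_lt_top ENNReal.ofReal_lt_top ?_
  have hb : IntegrableOn (fun x : ℝ => Cδ * (x ^ (1:ℝ) * Real.exp (-δ * x ^ (1:ℝ)))) (Set.Ioi 0) :=
    (integrableOn_rpow_mul_exp_neg_mul_rpow (by norm_num) (by norm_num) hδ).const_mul _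
  refine lt_of_le_of_lt ?_ hb.lintegral_lt_top
  refine setLIntegral_mono (by fun_prop) fun t ht => ?_
  have ht' : 0 < t := ht
  have hS : MeasurableSet {a : ℝ | t < |a|} := measurableSet_lt measurable_const (by fun_prop)
  rw [withDensity_apply _ hS, ← ofReal_integral_eq_lintegral_ofReal hζi.integrableOn
    (Eventually.of_forall hζnn), ← ENNReal.ofReal_mul (integral_nonneg hζnn)]
  refine ENNReal.ofReal_le_ofReal ?_
  have := mul_le_mul_of_nonneg_right (htail t ht'.le) ht'.le
  rw [show (2:ℝ) - 1 = 1 by norm_num, Real.rpow_one]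
  linarith

lemma aux_final (νl νr : Measure ℝ)
    (hfinl : ∀ x : ℝ, νl (Set.Iic x) < ⊤) (hfinr : ∀ x : ℝ, νr (Set.Iic x) < ⊤)
    (cr ρ : ℝ) (hρ0 : 0 < ρ) (Ca : ℝ) (x₁ : ℝ)
    (hasymr : ∀ x ≥ x₁, |(νr (Set.Iic x)).toReal - (x + cr)| ≤ Ca * Real.exp (-ρ * x))
    (hint : Integrable (fun y => Fs νr y / (1 + Real.exp y))) :
    ∃ k₀ : ℝ, ∀ k ≥ k₀,
      |Lk k (GkDH νl νr k) - (1 / CkDH νl νr k) * ∫ y, Fs νr y / (1 + Real.exp y)|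
          ≤ 10 * Real.exp (-k) := by
  have hmono : ∀ ν : Measure ℝ, (∀ x : ℝ, ν (Set.Iic x) < ⊤) → Monotone (Fs ν) :=
    fun ν h a b hab => ENNReal.toReal_mono (h b).ne (measure_mono (Set.Iic_subset_Iic.2 hab))
  have hnn : ∀ (ν : Measure ℝ) x, 0 ≤ Fs ν x := fun ν x => ENNReal.toReal_nonneg
  set b := |cr| + |Ca| with hb
  have hb0 : 0 ≤ b := by positivity
  refine ⟨max (max x₁ 0) (2 * b + 2), fun k hk => ?_⟩
  have hk1 : x₁ ≤ k := le_trans (le_trans (le_max_left _ _) (le_max_left _ _)) hk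
  have hk2 : 2 * b + 2 ≤ k := le_trans (le_max_right _ _) hk
  have hF : ∀ y, k ≤ y → |Fs νr y - y| ≤ b := by
    intro y hy
    have h1 := hasymr y (by linarith)
    have h2 : Ca * Real.exp (-ρ * y) ≤ |Ca| := by
      calc Ca * Real.exp (-ρ * y) ≤ |Ca| * 1 :=
            mul_le_mul (le_abs_self _) (Real.exp_le_one_iff.2 (by nlinarith)) (Real.exp_pos _).le
              (abs_nonneg _)
        _ = |Ca| := mul_one _
    change |Fs νr y - (y + cr)| ≤ _ at h1
    rw [abs_le] at h1 ⊢
    constructor <;> linarith [le_abs_self cr, neg_abs_le cr]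
  set C := CkDH νl νr k with hC
  have hCl : Fs νl k ≤ C := by rw [hC, CkDH]; linarith [hnn νr k]
  have hCr : Fs νr k ≤ C := by rw [hC, CkDH]; linarith [hnn νl k]
  have hCk : k / 2 ≤ C := by
    have := (abs_le.1 (hF k le_rfl)).1
    linarith
  have hC1 : 1 ≤ C := by linarith
  have hC0 : 0 < C := by linarith
  let D : ℝ → ℝ := fun y => GkDH νl νr k (k - y) / (1 + Real.exp y)
      - (1 / C) * (Fs νr y / (1 + Real.exp y))
  have hDm : Measurable D := by
    have m1 := (hmono νl hfinl).measurable
    have m2 := (hmono νr hfinr).measurable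
    have mG : Measurable (GkDH νl νr k) := by
      unfold GkDH
      exact Measurable.ite measurableSet_Ici (by fun_prop) (by fun_prop)
    fun_prop
  have hDb : ∀ y, ‖D y‖ ≤
      (Set.Ioi k).indicator (fun y => 5 * Real.exp (-k / 2) * Real.exp (-(1/2) * y)) y := by
    intro y
    by_cases hy : k < y
    · rw [Set.indicator_of_mem (by exact hy)]
      have e : D y = ((1 - Fs νl (k - y + k) / C) - Fs νr y / C) / (1 + Real.exp y) := by
        simp only [D, GkDH]
        rw [if_neg (by linarith)]
        ring
      have a1 : Fs νl (k - y + k) / C ≤ 1 := by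
        rw [div_le_one hC0]
        exact (hmono νl hfinl (by linarith)).trans hCl
      have a0 : 0 ≤ Fs νl (k - y + k) / C := div_nonneg (hnn _ _) hC0.le
      have a2 : 0 ≤ Fs νr y / C := div_nonneg (hnn _ _) hC0.le
      have a3 : Fs νr y / C ≤ 4 + (y - k) := by
        rw [div_le_iff₀ hC0]
        have := (abs_le.1 (hF y hy.le)).2
        nlinarith
      have a4 : 5 + (y - k) ≤ 5 * Real.exp ((y - k) / 2) := by
        linarith [Real.add_one_le_exp ((y - k) / 2)]
      rw [e, norm_div, Real.norm_eq_abs, Real.norm_eq_abs, abs_of_pos (by positivity : 0 < 1 + Real.exp y),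
        div_le_iff₀ (by positivity)]
      have a5 : |1 - Fs νl (k - y + k) / C - Fs νr y / C| ≤ 5 * Real.exp ((y - k) / 2) := by
        rw [abs_le]; constructor <;> linarith
      refine a5.trans ?_
      have e2 : Real.exp ((y - k) / 2) = Real.exp (-k / 2) * Real.exp (-(1/2) * y) * Real.exp y := by
        rw [← Real.exp_add, ← Real.exp_add]; congr 1; ring
      rw [e2]
      have := mul_pos (Real.exp_pos (-k / 2)) (Real.exp_pos (-(1/2) * y))
      nlinarith
    · rw [Set.indicator_of_notMem (by exact hy)]
      have : D y = 0 := by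
        simp only [D, GkDH]
        rw [if_pos (by linarith)]
        simp only [sub_sub_cancel, ← hC]
        ring
      simp [this]
  have hbi : Integrable
      ((Set.Ioi k).indicator (fun y => 5 * Real.exp (-k / 2) * Real.exp (-(1/2) * y))) :=
    (integrable_indicator_iff measurableSet_Ioi).2
      ((integrableOn_exp_mul_Ioi (by norm_num) k).const_mul _)
  have hDi : Integrable D := Integrable.mono' hbi hDm.aestronglyMeasurable (Eventually.of_forall hDb)
  have hL : Lk k (GkDH νl νr k) = ∫ y, GkDH νl νr k (k - y) / (1 + Real.exp y) := by
    unfold Lk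
    rw [← integral_sub_left_eq_self (fun x => GkDH νl νr k x / (1 + Real.exp (k - x))) volume k]
    simp only [sub_sub_cancel]
  have hGi : Integrable fun y => GkDH νl νr k (k - y) / (1 + Real.exp y) := by
    refine (hDi.add (hint.const_mul (1 / C))).congr (Eventually.of_forall fun y => ?_)
    simp [D]
  have hfin : Lk k (GkDH νl νr k) - (1 / C) * ∫ y, Fs νr y / (1 + Real.exp y) = ∫ y, D y := by
    rw [hL, ← integral_const_mul, ← integral_sub hGi (hint.const_mul _)]
  rw [hfin, ← Real.norm_eq_abs]
  refine (norm_integral_le_of_norm_le hbi (Eventually.of_forall hDb)).trans ?_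
  rw [integral_indicator measurableSet_Ioi, integral_const_mul, integral_exp_mul_Ioi (by norm_num)]
  have : Real.exp (-k) = Real.exp (-k / 2) * Real.exp (-(1/2) * k) := by
    rw [← Real.exp_add]; congr 1; ring
  rw [this]
  apply le_of_eq
  ring

/-- Lemma: asymptotics of L_k[G_k] as k → ∞. -/
theorem stmt12
    (ζ : ℝ → ℝ) (hζmeas : Measurable ζ) (hζnn : ∀ x, 0 ≤ ζ x)
    (hζprob : ∫ x, ζ x = 1)
    (hmean : ∫ x, x * ζ x = 0)
    (δ : ℝ) (hδ : 0 < δ) (Cδ : ℝ)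
    (htail : ∀ x : ℝ, 0 ≤ x → ∫ y in {y : ℝ | x < |y|}, ζ y ≤ Cδ * Real.exp (-δ * x))
    (θ : ℝ) (hθ0 : 0 < θ) (hθ1 : θ ≤ 1) (Cθ : ℝ)
    (hHolder : ∀ x y : ℝ, |ζ x - ζ y| ≤ Cθ * |x - y| ^ θ)
    (νl νr : Measure ℝ)
    (hinvl : IsInvariantY ζ νl) (hinvr : IsInvariantY (fun x => ζ (-x)) νr)
    (hfinl : ∀ x : ℝ, νl (Set.Iic x) < ⊤) (hfinr : ∀ x : ℝ, νr (Set.Iic x) < ⊤)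
    (cl cr ρ : ℝ) (hρ0 : 0 < ρ) (hρ1 : ρ < 1) (Ca : ℝ) (x₁ : ℝ)
    (hasyml : ∀ x ≥ x₁, |(νl (Set.Iic x)).toReal - (x + cl)| ≤ Ca * Real.exp (-ρ * x))
    (hasymr : ∀ x ≥ x₁, |(νr (Set.Iic x)).toReal - (x + cr)| ≤ Ca * Real.exp (-ρ * x))
 :
    ∃ C > 0, ∃ k₀ : ℝ, ∀ k ≥ k₀,
      |Lk k (GkDH νl νr k) - (1 / CkDH νl νr k) * ∫ y, Fs νr y / (1 + Real.exp y)|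
          ≤ C * Real.exp (-k) ∧
        |Lk k (GkDH νl νr k) - (1 / CkDH νl νr k) * ∫ y, Fs νl y / (1 + Real.exp y)|
          ≤ C * Real.exp (-k) := by
  have hζi : Integrable ζ := by
    by_contra h; rw [integral_undef h] at hζprob; norm_num at hζprob
  have h2 := aux_second ζ hζmeas hζnn hζi δ hδ Cδ htail
  have h2' : Integrable fun z => z ^ 2 * ζ (-z) := by
    have := h2.comp_neg
    simpa using this
  have e2 : ∫ z, z ^ 2 * ζ (-z) = ∫ z, z ^ 2 * ζ z := by
    rw [← integral_neg_eq_self (fun z => z ^ 2 * ζ z)]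
    simp
  obtain ⟨il, el⟩ := aux_key ζ hζmeas hζnn hζprob hmean h2 νl hinvl hfinl cl ρ hρ0 Ca x₁ hasyml
  obtain ⟨ir, er⟩ := aux_key (fun z => ζ (-z)) (by fun_prop) (fun z => hζnn _)
    (by rw [integral_neg_eq_self ζ]; exact hζprob)
    (by
      have := integral_neg_eq_self (fun z => z * ζ z) volume
      rw [hmean] at this
      simp only [neg_mul, integral_neg] at this
      linarith) h2' νr hinvr hfinr cr ρ hρ0 Ca x₁ hasymr
  rw [e2] at er
  obtain ⟨k₀, hk⟩ := aux_final νl νr hfinl hfinr cr ρ hρ0 Ca x₁ hasymr ir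
  refine ⟨10, by norm_num, k₀, fun k hkk => ⟨hk k hkk, ?_⟩⟩
  have := hk k hkk
  rw [er] at this
  rw [el]
  exact this
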